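/- Let 1 ≤ a ≤ b with b ≥ 2, and let G be a graph of order n with δ(G) ≥ a, n ≥ 3a + 4, and na even if a = b. If the complement of G has at most n - ⌈a/2⌉ - 1 edges, then G is [a,b]-covered; that is, every edge of G is contained in some spanning subgraph F with a ≤ d_F(v) ≤ b for all vertices v. -/

import Mathlib

open SimpleGraph Finset
open scoped Classical

/-- There is an [a,b]-factor of G (a spanning subgraph F with a ≤ d_F(v) ≤ b for all v)
containing the edge uv. -/
def HasABFactorThrough {V : Type*} [Fintype V] (G : SimpleGraph V) (a b : ℕ)
    (u v : V) : Prop :=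
  ∃ F : SimpleGraph V, F ≤ G ∧ F.Adj u v ∧
    ∀ w : V, a ≤ (F.neighborSet w).ncard ∧ (F.neighborSet w).ncard ≤ b

/-- G is [a,b]-covered: every edge of G lies in some [a,b]-factor. -/
def IsABCovered {V : Type*} [Fintype V] (G : SimpleGraph V) (a b : ℕ) : Prop :=
  ∀ u v : V, G.Adj u v → HasABFactorThrough G a b u v

theorem not_adj_sdiff_edge {V : Type*} (F : SimpleGraph V) {x y : V} (hxy : x ≠ y) :
    ¬(F \ edge x y).Adj x y := by
  simp [edge_adj, hxy]

theorem sdiff_edge_sup_edge {V : Type*} (F : SimpleGraph V) {x y : V} (h : F.Adj x y) :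
    F \ edge x y ⊔ edge x y = F := by
  ext z w
  simp only [sup_adj, sdiff_adj, edge_adj]
  have := h.symm
  grind

/-- Replace the edges `xy`, `pq` by `xp`, `yq`. -/
def switch {V : Type*} (F : SimpleGraph V) (x y p q : V) : SimpleGraph V :=
  (F \ edge x y) \ edge p q ⊔ edge x p ⊔ edge y q

theorem switch_adj {V : Type*} (F : SimpleGraph V) (x y p q z w : V) (hxp : x ≠ p) (hyq : y ≠ q) :
    (switch F x y p q).Adj z w ↔
      (F.Adj z w ∧ ¬(z = x ∧ w = y ∨ z = y ∧ w = x) ∧ ¬(z = p ∧ w = q ∨ z = q ∧ w = p)) ∨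
      (z = x ∧ w = p ∨ z = p ∧ w = x) ∨ (z = y ∧ w = q ∨ z = q ∧ w = y) := by
  simp only [switch, sup_adj, sdiff_adj, edge_adj]
  constructor
  · rintro ((⟨⟨h1, h2⟩, h3⟩ | h) | h)
    · have := h1.ne
      grind
    · grind
    · grind
  · grind

section
variable {V : Type*} [Fintype V]

/-- The finset of neighbours of `z` in `F`, formed with classical decidability. -/
noncomputable def nbr (F : SimpleGraph V) (z : V) : Finset V := univ.filter (F.Adj z)

@[simp] theorem mem_nbr {F : SimpleGraph V} {z w : V} : w ∈ nbr F z ↔ F.Adj z w := by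
  simp [nbr]

/-- The degree of `z` in `F`, formed with classical decidability. -/
noncomputable def dg (F : SimpleGraph V) (z : V) : ℕ := (nbr F z).card

theorem dg_sup_edge (F : SimpleGraph V) {x y : V} (hxy : x ≠ y) (h : ¬F.Adj x y) (z : V) :
    dg (F ⊔ edge x y) z = dg F z + (if z = x then 1 else 0) + (if z = y then 1 else 0) := by
  unfold dg
  by_cases hx : z = x
  · subst hx
    have : nbr (F ⊔ edge z y) z = insert y (nbr F z) := by
      ext w
      simp only [mem_nbr, sup_adj, edge_adj, mem_insert]
      grind
    rw [this, card_insert_of_notMem (by simpa using h)]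
    simp [hxy]
  · by_cases hy : z = y
    · subst hy
      have : nbr (F ⊔ edge x z) z = insert x (nbr F z) := by
        ext w
        simp only [mem_nbr, sup_adj, edge_adj, mem_insert]
        grind
      rw [this, card_insert_of_notMem (by simpa [adj_comm] using h)]
      simp [hx]
    · have : nbr (F ⊔ edge x y) z = nbr F z := by
        ext w
        simp only [mem_nbr, sup_adj, edge_adj]
        grind
      rw [this]; simp [hx, hy]

theorem dg_sdiff_edge (F : SimpleGraph V) {x y : V} (h : F.Adj x y) (z : V) :
    dg (F \ edge x y) z + (if z = x then 1 else 0) + (if z = y then 1 else 0) = dg F z := by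
  rw [← dg_sup_edge _ h.ne (not_adj_sdiff_edge F h.ne), sdiff_edge_sup_edge F h]

/-- Twice the number of common edges of `F` and `H`. -/
noncomputable def common (H F : SimpleGraph V) : ℕ := ∑ z, dg (F ⊓ H) z

theorem common_sup_edge (H F : SimpleGraph V) {x y : V} (hxy : x ≠ y) (h : ¬F.Adj x y) :
    common H (F ⊔ edge x y) = common H F + 2 * (if H.Adj x y then 1 else 0) := by
  unfold common
  by_cases hH : H.Adj x y
  · have : (F ⊔ edge x y) ⊓ H = (F ⊓ H) ⊔ edge x y := by
      ext z w
      simp only [sup_adj, inf_adj, edge_adj]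
      have := hH.symm
      grind
    rw [this]
    simp_rw [dg_sup_edge (F ⊓ H) hxy (fun h' => h h'.1)]
    simp [sum_add_distrib, hH]
  · have : (F ⊔ edge x y) ⊓ H = F ⊓ H := by
      ext z w
      simp only [sup_adj, inf_adj, edge_adj]
      have : ¬ H.Adj y x := fun h => hH h.symm
      grind
    rw [this]; simp [hH]

theorem common_sdiff_edge (H F : SimpleGraph V) {x y : V} (h : F.Adj x y) :
    common H (F \ edge x y) + 2 * (if H.Adj x y then 1 else 0) = common H F := by
  rw [← common_sup_edge H _ h.ne (not_adj_sdiff_edge F h.ne), sdiff_edge_sup_edge F h]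

theorem switch_spec (H F : SimpleGraph V) {x y p q : V} (hxy : F.Adj x y) (hpq : F.Adj p q)
    (hxp : x ≠ p) (hxp' : ¬F.Adj x p) (hyq : y ≠ q) (hyq' : ¬F.Adj y q) :
    (∀ z, dg (switch F x y p q) z = dg F z) ∧
    common H (switch F x y p q) + 2 * (if H.Adj x y then 1 else 0)
      + 2 * (if H.Adj p q then 1 else 0)
      = common H F + 2 * (if H.Adj x p then 1 else 0) + 2 * (if H.Adj y q then 1 else 0) := by
  have h1 : (F \ edge x y).Adj p q := by
    simp only [sdiff_adj, edge_adj]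
    have := hxy.symm
    grind
  have h2 : ¬((F \ edge x y) \ edge p q).Adj x p := fun h => hxp' h.1.1
  have h3 : ¬((F \ edge x y) \ edge p q ⊔ edge x p).Adj y q := by
    simp only [sup_adj, sdiff_adj, edge_adj]
    have := hxy.ne
    grind
  constructor
  · intro z
    have e1 := dg_sdiff_edge F hxy z
    have e2 := dg_sdiff_edge _ h1 z
    have e3 := dg_sup_edge _ hxp h2 z
    have e4 := dg_sup_edge _ hyq h3 z
    unfold switch
    omega
  · have e1 := common_sdiff_edge H F hxy
    have e2 := common_sdiff_edge H _ h1
    have e3 := common_sup_edge H _ hxp h2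
    have e4 := common_sup_edge H _ hyq h3
    unfold switch
    omega

theorem sum_dg (F : SimpleGraph V) : ∑ z, dg F z = 2 * F.edgeFinset.card := by
  rw [← F.sum_degrees_eq_twice_card_edges]
  refine sum_congr rfl fun z _ => ?_
  unfold dg
  rw [← card_neighborFinset_eq_degree]
  congr 1
  ext w; simp

theorem exists_graph_of_degrees (f : V → ℕ) (a : ℕ) (u v : V)
    (hn : 3 * a + 4 ≤ Fintype.card V) (hfa : ∀ z, f z ≤ a)
    (hfD : ∀ z, z ≠ u → z ≠ v → f z = a) (hpar : Even (∑ z, f z)) :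
    ∃ F : SimpleGraph V, ∀ z, dg F z = f z := by
  obtain ⟨F, hF, hmax⟩ := Set.exists_max_image {F : SimpleGraph V | ∀ z, dg F z ≤ f z}
    (fun F => ∑ z, dg F z) (Set.toFinite _) ⟨⊥, by simp [dg, nbr]⟩
  refine ⟨F, ?_⟩
  have hF : ∀ z, dg F z ≤ f z := hF
  by_contra! hne
  obtain ⟨x, hx⟩ := hne
  have hx : dg F x < f x := lt_of_le_of_ne (hF x) hx
  have hadd : ∀ r, r ≠ x → dg F r < f r → F.Adj x r := by
    intro r hr hr'
    by_contra hadj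
    have hd := dg_sup_edge F hr.symm hadj
    have h1 := hmax (F ⊔ edge x r) (fun z => by
      have := hF z
      rw [hd]
      split_ifs <;> subst_vars <;> simp_all)
    simp [hd, sum_add_distrib] at h1
  obtain ⟨y, hy, hxy⟩ : ∃ y, dg F y < f y ∧ (y = x → dg F x + 2 ≤ f x) := by
    by_contra! hcon
    have hx2 := hcon x hx
    have hother : ∀ z, z ≠ x → dg F z = f z := by
      intro z hz
      by_contra h
      exact hz (hcon z (lt_of_le_of_ne (hF z) h)).1
    have e1 : ∑ z, f z = ∑ z, dg F z + 1 := by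
      have e2 : ∑ z ∈ univ.erase x, f z = ∑ z ∈ univ.erase x, dg F z :=
        sum_congr rfl (fun z hz => (hother z (ne_of_mem_erase hz)).symm)
      have e3 := add_sum_erase univ f (mem_univ x)
      have e4 := add_sum_erase univ (dg F) (mem_univ x)
      have := hcon x hx
      omega
    rw [sum_dg] at e1
    obtain ⟨m, hm⟩ := hpar
    omega
  have hax : dg F x < a := lt_of_lt_of_le hx (hfa x)
  have hay : dg F y < a := lt_of_lt_of_le hy (hfa y)
  obtain ⟨r, hr⟩ : ∃ r, r ∉ (nbr F x) ∪ (nbr F y) ∪ {x, y, u, v} := by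
    by_contra! hall
    have h1 : (univ : Finset V) ⊆ (nbr F x) ∪ (nbr F y) ∪ {x, y, u, v} :=
      fun r _ => hall r
    have h2 := card_le_card h1
    have h3 := card_union_le ((nbr F x) ∪ (nbr F y)) {x, y, u, v}
    have h4 := card_union_le (nbr F x) (nbr F y)
    have h5 : ({x, y, u, v} : Finset V).card ≤ 4 := card_le_four
    unfold dg at hax hay
    rw [card_univ] at h2
    omega
  simp only [mem_union, mem_nbr, mem_insert, mem_singleton, not_or] at hr
  obtain ⟨⟨hxr, hyr⟩, hrx, hry, hru, hrv⟩ := hr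
  have hra : dg F r = a := by
    rw [← hfD r hru hrv]
    refine le_antisymm (hF r) ?_
    by_contra! h
    exact hxr (hadd r hrx h)
  obtain ⟨s, hs, hs'⟩ : ∃ s ∈ nbr F r, s ∉ nbr F y := by
    apply exists_mem_notMem_of_card_lt_card
    unfold dg at hra hay
    omega
  simp only [mem_nbr] at hs hs'
  have hsy : y ≠ s := by rintro rfl; exact hyr hs.symm
  have h2 : ¬(F \ edge r s).Adj x r := fun h => hxr h.1
  have h3 : ¬(F \ edge r s ⊔ edge x r).Adj y s := by
    simp only [sup_adj, sdiff_adj, edge_adj]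
    have := hs.ne
    grind
  have e : ∀ z, dg (F \ edge r s ⊔ edge x r ⊔ edge y s) z
      = dg F z + (if z = x then 1 else 0) + (if z = y then 1 else 0) := fun z => by
    have e1 := dg_sdiff_edge F hs z
    have e2 := dg_sup_edge _ (Ne.symm hrx) h2 z
    have e3 := dg_sup_edge _ hsy h3 z
    omega
  have h1 := hmax (F \ edge r s ⊔ edge x r ⊔ edge y s) (fun z => by
    have := hF z
    rw [e]
    by_cases h1 : z = x <;> by_cases h2 : z = y <;> simp_all)
  simp [e, sum_add_distrib] at h1

/-- The vertices other than `x` adjacent to `x` neither in `F` nor in `H`. -/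
noncomputable def far (H F : SimpleGraph V) (x : V) : Finset V :=
  univ.filter fun z => z ≠ x ∧ ¬F.Adj x z ∧ ¬H.Adj x z

theorem mem_far {H F : SimpleGraph V} {x z : V} :
    z ∈ far H F x ↔ z ≠ x ∧ ¬F.Adj x z ∧ ¬H.Adj x z := by
  simp [far]

theorem card_le_card_far (H F : SimpleGraph V) {x y : V} (hF : F.Adj x y) (hH : H.Adj x y) :
    Fintype.card V ≤ (far H F x).card + dg F x + dg H x := by
  have h1 : (univ : Finset V) ⊆ far H F x ∪ {x} ∪ (nbr F x ∪ nbr H x) := by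
    intro z _
    simp only [mem_union, mem_far, mem_nbr, mem_singleton]
    tauto
  have h2 := card_le_card h1
  have h3 := card_union_le (far H F x ∪ {x}) (nbr F x ∪ nbr H x)
  have h4 := card_union_le (far H F x) {x}
  have h5 := card_union_add_card_inter (nbr F x) (nbr H x)
  have h6 : 0 < (nbr F x ∩ nbr H x).card := card_pos.2 ⟨y, by simp [hF, hH]⟩
  rw [card_univ] at h2
  rw [card_singleton] at h4
  unfold dg
  omega

theorem sum_card_nbr_inter_comm (F : SimpleGraph V) (A W : Finset V) :
    ∑ p ∈ A, (nbr F p ∩ W).card = ∑ w ∈ W, (nbr F w ∩ A).card := by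
  have := sum_card_bipartiteAbove_eq_sum_card_bipartiteBelow (s := A) (t := W) F.Adj
  convert this using 2
  · congr 1; ext z; simp [bipartiteAbove, and_comm]
  · congr 1; ext z; simp [bipartiteBelow, and_comm, F.adj_comm]

theorem sum_card_nbr_inter_le (F : SimpleGraph V) {a : ℕ} (hd : ∀ z, dg F z ≤ a) {x y : V}
    (hxy : F.Adj x y) (A : Finset V) (hyA : y ∉ A) :
    ∑ p ∈ A, (nbr F p ∩ insert y ((nbr F y).erase x)).card ≤
      a * (a - 1) + if x ∈ A then 1 else 0 := by
  rw [sum_card_nbr_inter_comm, sum_insert (by simp)]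
  have hx : x ∈ nbr F y := by simpa using hxy.symm
  have hc : ((nbr F y).erase x).card = dg F y - 1 := card_erase_of_mem hx
  have h1 : (nbr F y ∩ A).card ≤ dg F y - 1 + if x ∈ A then 1 else 0 := by
    split_ifs with h
    · have := card_le_card (inter_subset_left : nbr F y ∩ A ⊆ nbr F y)
      unfold dg; omega
    · rw [← hc, add_zero]
      refine card_le_card fun z hz => ?_
      rw [mem_inter] at hz
      refine mem_erase.2 ⟨?_, hz.1⟩
      rintro rfl; exact h hz.2
  have h2 : ∑ w ∈ (nbr F y).erase x, (nbr F w ∩ A).card ≤ (dg F y - 1) * (a - 1) := by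
    rw [← hc, ← smul_eq_mul]
    refine sum_le_card_nsmul _ _ _ fun w hw => ?_
    have hw' : y ∈ nbr F w := by
      have := mem_of_mem_erase hw
      rw [mem_nbr] at *
      exact this.symm
    calc (nbr F w ∩ A).card ≤ ((nbr F w).erase y).card := by
          refine card_le_card fun z hz => ?_
          rw [mem_inter] at hz
          refine mem_erase.2 ⟨?_, hz.1⟩
          rintro rfl; exact hyA hz.2
      _ = dg F w - 1 := card_erase_of_mem hw'
      _ ≤ a - 1 := Nat.sub_le_sub_right (hd w) 1
  have h3 : (dg F y - 1) * (a - 1) ≤ (a - 1) * (a - 1) :=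
    Nat.mul_le_mul_right _ (Nat.sub_le_sub_right (hd y) 1)
  have h4 : a * (a - 1) = (a - 1) * (a - 1) + (a - 1) := by
    rcases a with _ | a
    · rfl
    · simp; ring
  have := hd y
  omega

theorem two_mul_sum_dg (H : SimpleGraph V) (S : Finset V) :
    2 * ∑ z ∈ S, dg H z + ∑ z ∈ Sᶜ, (nbr H z ∩ Sᶜ).card =
      ∑ z, dg H z + ∑ z ∈ S, (nbr H z ∩ S).card := by
  have hs : ∀ z, dg H z = (nbr H z ∩ S).card + (nbr H z ∩ Sᶜ).card := by
    intro z
    rw [← sdiff_eq_inter_compl]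
    exact (card_inter_add_card_sdiff _ _).symm
  have h1 := sum_card_nbr_inter_comm H S Sᶜ
  have h2 := sum_add_sum_compl S (dg H)
  have h3 : ∑ z ∈ S, dg H z = ∑ z ∈ S, (nbr H z ∩ S).card + ∑ z ∈ S, (nbr H z ∩ Sᶜ).card := by
    rw [← sum_add_distrib]; exact sum_congr rfl fun z _ => hs z
  have h4 : ∑ z ∈ Sᶜ, dg H z = ∑ z ∈ Sᶜ, (nbr H z ∩ S).card + ∑ z ∈ Sᶜ, (nbr H z ∩ Sᶜ).card := by
    rw [← sum_add_distrib]; exact sum_congr rfl fun z _ => hs z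
  omega

theorem card_nbr_inter_le (H : SimpleGraph V) {S : Finset V} {z : V} (hz : z ∈ S) :
    (nbr H z ∩ S).card ≤ S.card - 1 := by
  rw [← card_erase_of_mem hz]
  refine card_le_card fun w hw => ?_
  rw [mem_inter, mem_nbr] at hw
  exact mem_erase.2 ⟨hw.1.ne', hw.2⟩

theorem two_mul_sum_dg_le (H : SimpleGraph V) (S : Finset V) :
    2 * ∑ z ∈ S, dg H z ≤ ∑ z, dg H z + S.card * (S.card - 1) := by
  have h1 := two_mul_sum_dg H S
  have h2 : ∑ z ∈ S, (nbr H z ∩ S).card ≤ S.card * (S.card - 1) := by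
    rw [← smul_eq_mul]
    exact sum_le_card_nsmul _ _ _ fun z hz => card_nbr_inter_le H hz
  omega

theorem sum_card_nbr_inter_self_le (H : SimpleGraph V) {S : Finset V} {x u : V} (hx : x ∈ S)
    (hu : u ∈ S) (hux : u ≠ x) (hxu : ¬H.Adj x u) :
    ∑ z ∈ S, (nbr H z ∩ S).card + 2 ≤ S.card * (S.card - 1) := by
  have hlt : ∀ z ∈ S, ∀ w ∈ S, z ≠ w → ¬H.Adj z w → (nbr H z ∩ S).card + 1 ≤ S.card - 1 := by
    intro z hz w hw hzw hadj
    rw [← card_erase_of_mem hz, Nat.add_one_le_iff]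
    refine card_lt_card (ssubset_iff_of_subset ?_ |>.2
      ⟨w, mem_erase.2 ⟨hzw.symm, hw⟩, by simp [hadj]⟩)
    intro t ht
    rw [mem_inter, mem_nbr] at ht
    exact mem_erase.2 ⟨ht.1.ne', ht.2⟩
  have : ∑ z ∈ S, ((nbr H z ∩ S).card + (if z = x then 1 else 0) + if z = u then 1 else 0) ≤
      S.card * (S.card - 1) := by
    rw [← smul_eq_mul]
    refine sum_le_card_nsmul _ _ _ fun z hz => ?_
    have h0 := card_nbr_inter_le H hz
    by_cases h1 : z = x
    · subst h1
      simpa [hux.symm] using hlt z hz u hu hux.symm hxu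
    · by_cases h2 : z = u
      · subst h2
        simpa [h1] using hlt z hz x hx hux (fun h => hxu h.symm)
      · simpa [h1, h2] using h0
  simpa [sum_add_distrib, hx, hu, add_assoc] using this

theorem two_mul_sum_dg_add_two_le (H : SimpleGraph V) {S : Finset V} {x u v : V} (hx : x ∈ S)
    (huv : H.Adj u v) (hux : u ≠ x) (hvx : v ≠ x) (hxu : ¬H.Adj x u) (hxv : ¬H.Adj x v) :
    2 * ∑ z ∈ S, dg H z + 2 ≤ ∑ z, dg H z + S.card * (S.card - 1) := by
  have h1 := two_mul_sum_dg H S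
  by_cases hu : u ∈ S
  · have := sum_card_nbr_inter_self_le H hx hu hux hxu
    omega
  by_cases hv : v ∈ S
  · have := sum_card_nbr_inter_self_le H hx hv hvx hxv
    omega
  have h2 : ∑ z ∈ S, (nbr H z ∩ S).card ≤ S.card * (S.card - 1) := by
    rw [← smul_eq_mul]
    exact sum_le_card_nsmul _ _ _ fun z hz => card_nbr_inter_le H hz
  have h3 : ∑ z ∈ {u, v}, (nbr H z ∩ Sᶜ).card ≤ ∑ z ∈ Sᶜ, (nbr H z ∩ Sᶜ).card := by
    refine sum_le_sum_of_subset fun z hz => ?_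
    rcases mem_insert.1 hz with rfl | hz
    · simpa using hu
    · rw [mem_singleton.1 hz]; simpa using hv
  rw [sum_pair huv.ne] at h3
  have h4 : 0 < (nbr H u ∩ Sᶜ).card := card_pos.2 ⟨v, by simp [huv, hv]⟩
  have h5 : 0 < (nbr H v ∩ Sᶜ).card := card_pos.2 ⟨u, by simp [huv.symm, hu]⟩
  omega

/-- `F` has degrees `f`, at most `c` pairs in common with `H`, and `xy` is one of these edges. -/
structure Near (H : SimpleGraph V) (f : V → ℕ) (c : ℕ) (F : SimpleGraph V) (x y : V) : Prop where
  deg : ∀ z, dg F z = f z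
  common_le : common H F ≤ c
  adj : F.Adj x y
  adj' : H.Adj x y

theorem Near.symm {H F : SimpleGraph V} {f : V → ℕ} {c : ℕ} {x y : V} (h : Near H f c F x y) :
    Near H f c F y x :=
  ⟨h.deg, h.common_le, h.adj.symm, h.adj'.symm⟩

/-- `c` is the least value of `common H F` over all graphs `F` with degrees `f`, and `s` is a lower
bound for the `H`-degree sum of an edge shared by `H` and a graph attaining it. -/
structure Extremal (H : SimpleGraph V) (f : V → ℕ) (c s : ℕ) : Prop where
  le_common : ∀ F, (∀ z, dg F z = f z) → c ≤ common H F
  le_add : ∀ F x y, Near H f c F x y → s ≤ dg H x + dg H y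

theorem Extremal.near_switch {H F : SimpleGraph V} {f : V → ℕ} {c s : ℕ} {x y p q : V}
    (hE : Extremal H f c s) (hN : Near H f c F x y) (hp : p ∈ far H F x) (hpq : F.Adj p q)
    (hqy : q ≠ y) (hyq : ¬F.Adj y q) : Near H f c (switch F x y p q) y q := by
  obtain ⟨hpx, hxp, hxp'⟩ := mem_far.1 hp
  obtain ⟨h1, h2⟩ := switch_spec H F hN.adj hpq hpx.symm hxp hqy.symm hyq
  have hd : ∀ z, dg (switch F x y p q) z = f z := fun z => (h1 z).trans (hN.deg z)
  have h3 := hE.le_common _ hd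
  have h4 := hN.common_le
  rw [if_pos hN.adj', if_neg hxp'] at h2
  have h5 : H.Adj y q := by
    by_contra h
    rw [if_neg h] at h2
    omega
  rw [if_pos h5] at h2
  refine ⟨hd, by omega, ?_, h5⟩
  rw [switch_adj _ _ _ _ _ _ _ hpx.symm hqy.symm]
  simp [hqy.symm]

/-- The neighbours in `F` of `far H F x` that lie outside the closed neighbourhood of `y`. -/
noncomputable def out (H F : SimpleGraph V) (x y : V) : Finset V :=
  univ.filter fun q => q ≠ y ∧ ¬F.Adj y q ∧ ∃ p ∈ far H F x, F.Adj p q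

theorem mem_out {H F : SimpleGraph V} {x y q : V} :
    q ∈ out H F x y ↔ q ≠ y ∧ ¬F.Adj y q ∧ ∃ p ∈ far H F x, F.Adj p q := by
  simp [out]

theorem Extremal.adj_of_mem_out {H F : SimpleGraph V} {f : V → ℕ} {c s : ℕ} {x y q : V}
    (hE : Extremal H f c s) (hN : Near H f c F x y) (hq : q ∈ out H F x y) :
    H.Adj y q ∧ s ≤ dg H y + dg H q := by
  obtain ⟨h1, h2, p, hp, hpq⟩ := mem_out.1 hq
  have := hE.near_switch hN hp hpq h1 h2
  exact ⟨this.adj', hE.le_add _ _ _ this⟩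

theorem Near.ne_of_mem_out {H F : SimpleGraph V} {f : V → ℕ} {c : ℕ} {x y q : V}
    (hN : Near H f c F x y) (hq : q ∈ out H F x y) : q ≠ x := by
  rintro rfl
  exact (mem_out.1 hq).2.1 hN.adj.symm

theorem Extremal.card_out_lt {H F : SimpleGraph V} {f : V → ℕ} {c s : ℕ} {x y : V}
    (hE : Extremal H f c s) (hN : Near H f c F x y) : (out H F x y).card + 1 ≤ dg H y := by
  have hx : x ∉ out H F x y := fun h => hN.ne_of_mem_out h rfl
  rw [← card_insert_of_notMem hx]
  refine card_le_card fun z hz => mem_nbr.2 ?_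
  rcases mem_insert.1 hz with rfl | hz
  · exact hN.adj'.symm
  · exact (hE.adj_of_mem_out hN hz).1

theorem nbr_subset_of_mem_far {H F : SimpleGraph V} {x y p : V} (hp : p ∈ far H F x) :
    nbr F p ⊆ insert y ((nbr F y).erase x) ∪ out H F x y := by
  intro q hq
  rw [mem_nbr] at hq
  have hqx : q ≠ x := by
    rintro rfl
    exact (mem_far.1 hp).2.1 hq.symm
  simp only [mem_union, mem_insert, mem_erase, mem_nbr, mem_out]
  have : ∃ p ∈ far H F x, F.Adj p q := ⟨p, hp, hq⟩
  tauto

/-- The standing hypotheses: `H` is to be avoided by a graph with degrees `f`. -/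
structure Config (H : SimpleGraph V) (f : V → ℕ) (a : ℕ) (u v : V) : Prop where
  two_le : 2 ≤ a
  le_card : 3 * a + 4 ≤ Fintype.card V
  sum_le : ∑ z, dg H z + a ≤ 2 * Fintype.card V
  adj : H.Adj u v
  deg_add_lt : ∀ z, dg H z + f z < Fintype.card V
  le : ∀ z, f z ≤ a
  ge : ∀ z, a ≤ f z + 1
  eq : ∀ z, z ≠ u → z ≠ v → f z = a

theorem Config.mul_card_le {H : SimpleGraph V} {f : V → ℕ} {a : ℕ} {u v : V}
    (hC : Config H f a u v) (A : Finset V) :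
    a * A.card ≤ ∑ z ∈ A, f z + (({u, v} : Finset V) ∩ A).card := by
  have h1 : (({u, v} : Finset V) ∩ A).card = ∑ z ∈ A, if z ∈ ({u, v} : Finset V) then 1 else 0 := by
    rw [inter_comm, ← filter_mem_eq_inter, card_filter]
  rw [h1, ← sum_add_distrib, mul_comm, ← smul_eq_mul]
  refine card_nsmul_le_sum _ _ _ fun z _ => ?_
  split_ifs with h
  · exact hC.ge z
  · simp only [mem_insert, mem_singleton, not_or] at h
    exact (hC.eq z h.1 h.2).ge

theorem Near.mul_card_far_le {H F : SimpleGraph V} {f : V → ℕ} {a c : ℕ} {u v x y : V}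
    (hN : Near H f c F x y) (hC : Config H f a u v) :
    a * (far H F x).card ≤ a * (a - 1) + a * (out H F x y).card +
      (({u, v} : Finset V) ∩ far H F x).card := by
  have hd : ∀ z, dg F z ≤ a := fun z => (hN.deg z).trans_le (hC.le z)
  have hy : y ∉ far H F x := fun h => (mem_far.1 h).2.1 hN.adj
  have hx : x ∉ far H F x := fun h => (mem_far.1 h).1 rfl
  have h1 := hC.mul_card_le (far H F x)
  have h2 := sum_card_nbr_inter_le F hd hN.adj _ hy
  rw [if_neg hx] at h2
  have h3 : ∑ p ∈ far H F x, (nbr F p ∩ out H F x y).card ≤ a * (out H F x y).card := by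
    rw [sum_card_nbr_inter_comm, mul_comm, ← smul_eq_mul]
    exact sum_le_card_nsmul _ _ _ fun z _ => (card_le_card inter_subset_left).trans (hd z)
  have h4 : ∑ p ∈ far H F x, f p ≤ ∑ p ∈ far H F x,
      ((nbr F p ∩ insert y ((nbr F y).erase x)).card + (nbr F p ∩ out H F x y).card) := by
    refine sum_le_sum fun p hp => ?_
    rw [← hN.deg p, dg]
    refine (card_le_card ?_).trans (card_union_le _ _)
    rw [← inter_union_distrib_left]
    exact subset_inter Subset.rfl (nbr_subset_of_mem_far hp)
  rw [sum_add_distrib] at h4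
  omega

theorem Extremal.card_out_le_one {H F : SimpleGraph V} {f : V → ℕ} {a c s : ℕ} {u v x y : V}
    (hC : Config H f a u v) (hE : Extremal H f c s) (hN : Near H f c F x y)
    (hs : dg H x + dg H y ≤ s) (hyx : dg H y ≤ dg H x) : (out H F x y).card ≤ 1 := by
  by_contra! hk
  have hX := card_le_card_far H F hN.adj hN.adj'
  have hA := hN.mul_card_far_le hC
  have hY := hE.card_out_lt hN
  have hn := hC.le_card
  have ha := hC.two_le
  have hm := hC.sum_le
  have hfx := hC.le x
  rw [hN.deg] at hX
  have key : ∀ j ≤ (out H F x y).card,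
      2 * (dg H x + dg H y + j * dg H x) ≤ ∑ z, dg H z + (j + 2) * (j + 1) ∧
      ((({u, v} : Finset V) ∩ far H F x).card = 2 →
        2 * (dg H x + dg H y + j * dg H x) + 2 ≤ ∑ z, dg H z + (j + 2) * (j + 1)) := by
    intro j hj
    obtain ⟨P, hP, rfl⟩ := exists_subset_card_eq hj
    have hxP : x ∉ P := fun h => hN.ne_of_mem_out (hP h) rfl
    have hyP : y ∉ P := fun h => (mem_out.1 (hP h)).1 rfl
    have hx : x ∉ insert y P := by simp [hxP, hN.adj.ne]
    have h1 : (insert x (insert y P)).card = P.card + 2 := by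
      rw [card_insert_of_notMem hx, card_insert_of_notMem hyP]
    have h2 : dg H x + dg H y + P.card * dg H x ≤ ∑ z ∈ insert x (insert y P), dg H z := by
      rw [sum_insert hx, sum_insert hyP, ← smul_eq_mul, add_assoc]
      refine Nat.add_le_add_left (Nat.add_le_add_left (card_nsmul_le_sum _ _ _ fun q hq => ?_) _) _
      have := (hE.adj_of_mem_out hN (hP hq)).2
      omega
    constructor
    · have := two_mul_sum_dg_le H (insert x (insert y P))
      rw [h1] at this
      simp only [Nat.add_succ_sub_one] at this
      omega
    · intro h3
      have h4 : ({u, v} : Finset V) ⊆ far H F x := by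
        rw [← inter_eq_left]
        exact eq_of_subset_of_card_le inter_subset_left (h3 ▸ card_le_two)
      have hu := mem_far.1 (h4 (mem_insert_self u _))
      have hv := mem_far.1 (h4 (mem_insert_of_mem (mem_singleton_self v)))
      have := two_mul_sum_dg_add_two_le H (mem_insert_self x (insert y P)) hC.adj hu.1 hv.1
        hu.2.2 hv.2.2
      rw [h1] at this
      simp only [Nat.add_succ_sub_one] at this
      omega
  have ht : (({u, v} : Finset V) ∩ far H F x).card ≤ 2 :=
    (card_le_card inter_subset_left).trans card_le_two
  generalize (({u, v} : Finset V) ∩ far H F x).card = t at *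
  generalize (out H F x y).card = k at *
  generalize (far H F x).card = A at *
  have hA1 : A ≤ a - 1 + k ∨ a = 2 ∧ t = 2 ∧ A ≤ k + 2 := by
    by_contra! h
    have h1 : a * (a - 1 + k + 1) ≤ a * A := Nat.mul_le_mul_left _ h.1
    rw [mul_add, mul_add] at h1
    have h2 : a = 2 := by omega
    subst h2
    omega
  have h2 := key 2 hk
  rcases Nat.lt_or_ge 2 k with h | h
  · have h3 := key 3 h
    rcases Nat.lt_or_ge 3 k with h | h
    · have h4 := key 4 h
      clear key h2 h3 hA
      rcases hA1 with hA1 | ⟨rfl, rfl, hA1⟩ <;> omega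
    · clear key h2 hA
      rcases hA1 with hA1 | ⟨rfl, rfl, hA1⟩ <;> omega
  · clear key hA
    rcases hA1 with hA1 | ⟨rfl, rfl, hA1⟩ <;> omega

theorem Extremal.card_out_ne_one {H F : SimpleGraph V} {f : V → ℕ} {a c s : ℕ} {u v x y : V}
    (hC : Config H f a u v) (hE : Extremal H f c s) (hN : Near H f c F x y)
    (hs : dg H x + dg H y ≤ s) (hyx : dg H y ≤ dg H x) : (out H F x y).card ≠ 1 := by
  intro hk
  obtain ⟨p', hp'⟩ := card_eq_one.1 hk
  have hp'o : p' ∈ out H F x y := by simp [hp']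
  obtain ⟨hp'y, hyp', p, hp, hpp'⟩ := mem_out.1 hp'o
  have hp'x := hN.ne_of_mem_out hp'o
  obtain ⟨hpx, hxp, hxp'⟩ := mem_far.1 hp
  have hN' := (hE.near_switch hN hp hpp' hp'y hyp').symm
  have hF' := fun z w => switch_adj F x y p p' z w hpx.symm hp'y.symm
  set F' := switch F x y p p'
  have hd : ∀ z, dg F z ≤ a := fun z => (hN.deg z).trans_le (hC.le z)
  have hX := card_le_card_far H F hN.adj hN.adj'
  have hX' := card_le_card_far H F' hN'.adj hN'.adj'
  have hA := hN.mul_card_far_le hC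
  have hY := hE.card_out_lt hN
  have hn := hC.le_card
  have ha := hC.two_le
  have hm := hC.sum_le
  have hfx := hC.le x
  have hfp' := hC.le p'
  have hyn := hN.adj.ne
  rw [hN.deg] at hX
  rw [hN'.deg] at hX'
  have hout : out H F' p' y ⊆ {x} := by
    intro z hz
    by_contra hzx
    rw [mem_singleton] at hzx
    have hzp := hN'.ne_of_mem_out hz
    have hzy := (mem_out.1 hz).1
    obtain ⟨hyz, hsz⟩ := hE.adj_of_mem_out hN' hz
    have hsp := (hE.adj_of_mem_out hN hp'o).2
    have h1 := two_mul_sum_dg_le H {x, y, p', z}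
    have h2 : y ∉ ({x, p', z} : Finset V) := by simp [hyn.symm, hp'y.symm, hzy.symm]
    have h3 : x ∉ ({p', z} : Finset V) := by simp [hp'x.symm, Ne.symm hzx]
    have h4 : p' ∉ ({z} : Finset V) := by simp [hzp.symm]
    have h5 : ({x, p', z} : Finset V) ⊆ nbr H y := by
      simp [insert_subset_iff, hN.adj'.symm, hyz, hN'.adj'.symm]
    have h6 := card_le_card h5
    have h7 := two_mul_sum_dg_le H {y, x, p', z}
    simp only [card_insert_of_notMem, sum_insert, h2, h3, h4, not_false_eq_true, card_singleton,
      sum_singleton] at h6 h7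
    change _ ≤ dg H y at h6
    have ht : (({u, v} : Finset V) ∩ far H F x).card ≤ 2 :=
      (card_le_card inter_subset_left).trans card_le_two
    rw [hk] at hA
    have hA1 : (far H F x).card ≤ a ∨ a = 2 ∧ (far H F x).card ≤ 3 := by
      by_contra! h
      have h1 : a * (a - 1 + 1 + 1) ≤ a * (far H F x).card := Nat.mul_le_mul_left _ (by omega)
      rw [mul_add, mul_add] at h1
      have h2 : a = 2 := by omega
      subst h2
      omega
    omega
  set W := insert y ((nbr F y).erase x) with hW
  have hW' : insert y ((nbr F' y).erase p') = W := by
    ext z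
    simp only [hW, mem_insert, mem_erase, mem_nbr, hF']
    grind
  set A := far H F x
  set A' := far H F' p'
  have hyA : y ∉ A ∪ A' := by
    simp only [mem_union, not_or]
    exact ⟨fun h => (mem_far.1 h).2.1 hN.adj, fun h => (mem_far.1 h).2.1 hN'.adj⟩
  have hxA : x ∉ A := fun h => (mem_far.1 h).1 rfl
  have hA₁ : ∀ z ∈ A, nbr F z ⊆ insert p' W := by
    intro z hz
    have := nbr_subset_of_mem_far (y := y) hz
    rwa [hp', union_comm, singleton_union] at this
  have hA₂ : ∀ z ∈ A', nbr F' z ⊆ insert x W := by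
    intro z hz
    have := nbr_subset_of_mem_far (y := y) hz
    rw [hW'] at this
    exact this.trans (by
      rw [union_comm, ← singleton_union]; exact union_subset_union_left hout)
  have hI' : ∀ z ∈ A, z ∈ A' → z ≠ p → ∀ w, F.Adj z w → w ∈ W := by
    intro z hz hz' hzp w hw
    have hzx : z ≠ x := fun h => hxA (h ▸ hz)
    have hzy : z ≠ y := fun h => hyA (h ▸ mem_union_left _ hz)
    refine (mem_insert.1 (hA₁ z hz (mem_nbr.2 hw))).resolve_left ?_
    rintro rfl
    refine (mem_far.1 hz').2.1 ((hF' _ _).2 (Or.inl ⟨hw.symm, ?_⟩))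
    have := (mem_far.1 hz').1
    grind
  have hw : ∀ z ∈ A ∪ A', dg F z + (if z ∈ (A ∩ A').erase p then 1 else 0) +
      (if z = x then 1 else 0) ≤ (nbr F z ∩ W).card + 1 := by
    intro z hz
    have hzy : z ≠ y := fun h => hyA (h ▸ hz)
    have h1 : (∀ w, F.Adj z w → w ∈ W) → dg F z ≤ (nbr F z ∩ W).card := fun h =>
      card_le_card fun w hw => mem_inter.2 ⟨hw, h w (mem_nbr.1 hw)⟩
    have h2 : ∀ t, (∀ w, F.Adj z w → w = t ∨ w ∈ W) → dg F z ≤ (nbr F z ∩ W).card + 1 :=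
      fun t h => le_trans (card_le_card (t := insert t (nbr F z ∩ W)) fun w hw => by
        have := h w (mem_nbr.1 hw)
        rw [mem_insert, mem_inter]
        tauto) (card_insert_le _ _)
    by_cases hzA : z ∈ A
    · have hzx : z ≠ x := fun h => hxA (h ▸ hzA)
      have h3 : ∀ w, F.Adj z w → w = p' ∨ w ∈ W := fun w hw =>
        mem_insert.1 (hA₁ z hzA (mem_nbr.2 hw))
      rw [if_neg hzx]
      split_ifs with h
      · have := h1 (hI' z (mem_of_mem_inter_left (mem_of_mem_erase h))
          (mem_of_mem_inter_right (mem_of_mem_erase h)) (ne_of_mem_erase h))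
        omega
      · exact h2 _ h3
    · have hzp : z ≠ p := fun h => hzA (h ▸ hp)
      have hzA' : z ∈ A' := (mem_union.1 hz).resolve_left hzA
      have hzp' := (mem_far.1 hzA').1
      have h3 := fun w (hw : F'.Adj z w) => mem_insert.1 (hA₂ z hzA' (mem_nbr.2 hw))
      rw [if_neg (fun h => hzA (mem_of_mem_inter_left (mem_of_mem_erase h)))]
      split_ifs with hzx
      · have := h1 fun w hw => by
          by_cases hwy : w = y
          · exact hwy ▸ mem_insert_self _ _
          · refine (h3 w ((hF' z w).2 ?_)).resolve_left ?_
            · grind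
            · rintro rfl
              exact hw.ne hzx
        omega
      · exact h2 x fun w hw => h3 w ((hF' z w).2 (by grind))
  have hI : A ∩ A' ⊆ {p, u, v} := by
    intro z hz
    obtain ⟨hz, hz'⟩ := mem_inter.1 hz
    have hzx : z ≠ x := fun h => hxA (h ▸ hz)
    have hzy : z ≠ y := fun h => hyA (h ▸ mem_union_left _ hz)
    simp only [mem_insert, mem_singleton]
    by_contra! h
    have h1 := hC.eq z h.2.1 h.2.2
    have h2 := hI' z hz hz' h.1
    have h3 : (nbr F z).card < W.card := by
      refine card_lt_card (ssubset_iff_of_subset (fun w hw => h2 w (mem_nbr.1 hw)) |>.2 ?_)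
      by_cases hzW : z ∈ W
      · exact ⟨z, hzW, by simp⟩
      · refine ⟨y, mem_insert_self _ _, fun h => hzW ?_⟩
        exact mem_insert_of_mem (mem_erase.2 ⟨hzx, mem_nbr.2 (mem_nbr.1 h).symm⟩)
    have h4 : W.card ≤ dg F y - 1 + 1 := by
      refine (card_insert_le _ _).trans ?_
      rw [card_erase_of_mem (mem_nbr.2 hN.adj.symm), dg]
    have h5 := hN.deg z
    have h6 := hd y
    unfold dg at h5 h4 h6
    omega
  have hU := sum_le_sum hw
  have hU' : ∑ z ∈ A ∪ A', (nbr F z ∩ W).card ≤ _ := sum_card_nbr_inter_le F hd hN.adj _ hyA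
  have hU'' := hC.mul_card_le (A ∪ A')
  have hcI := card_le_card hI
  have hcI' : (A ∩ A').card ≤ ((A ∩ A').erase p).card + 1 := by
    have := pred_card_le_card_erase (s := A ∩ A') (a := p)
    omega
  have hc3 : ({p, u, v} : Finset V).card ≤ 3 := card_le_three
  have hc2 : (({u, v} : Finset V) ∩ (A ∪ A')).card ≤ 2 :=
    (card_le_card inter_subset_left).trans card_le_two
  have hinc : (A ∪ A') ∩ (A ∩ A').erase p = (A ∩ A').erase p :=
    inter_eq_right.2 ((erase_subset _ _).trans (inter_subset_left.trans subset_union_left))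
  rw [sum_add_distrib, sum_add_distrib, sum_add_distrib, sum_congr rfl fun z _ => hN.deg z,
    sum_ite_mem, hinc, sum_ite_eq'] at hU
  simp only [sum_const, smul_eq_mul, mul_one] at hU
  change ∑ z ∈ A ∪ A', f z + _ + _ ≤ _ at hU
  have hui := card_union_add_card_inter A A'
  have hS := two_mul_sum_dg_le H {y, x, p'}
  have hS1 : y ∉ ({x, p'} : Finset V) := by simp [hyn.symm, hp'y.symm]
  have hS2 : x ∉ ({p'} : Finset V) := by simp [hp'x.symm]
  simp only [card_insert_of_notMem, sum_insert, hS1, hS2, not_false_eq_true, card_singleton,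
    sum_singleton] at hS
  have hsum : A.card + A'.card ≤ a + 3 := by
    by_contra! h
    obtain ⟨e, rfl⟩ : ∃ e, a = e + 1 := ⟨a - 1, by omega⟩
    have h1 : e * (e + 5 - (A ∩ A').card) ≤ e * (A ∪ A').card := Nat.mul_le_mul_left _ (by omega)
    simp only [Nat.add_sub_cancel, add_mul, one_mul] at hU' hU''
    have h2 : (A ∩ A').card ≤ 3 := hcI.trans hc3
    generalize (A ∩ A').card = i at *
    interval_cases i <;> simp only [Nat.reduceSubDiff, mul_add] at h1 <;> omega
  omega

/-- Two successive switches starting from opposite ends of a common edge `xy`. -/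
theorem Extremal.near_switch_switch {H F : SimpleGraph V} {f : V → ℕ} {c s : ℕ}
    {x y w q q' p' : V} (hE : Extremal H f c s) (hN : Near H f c F x y) (hw : w ∈ far H F x)
    (hq : q ∈ far H F y) (hqw : q ≠ w) (hqq' : F.Adj q q') (hq'x : q' ≠ x) (hxq' : ¬F.Adj x q')
    (hwp' : F.Adj w p') (hp'q' : p' ≠ q') (h : F.Adj q' p' → p' = q) :
    H.Adj x q' ∧ s ≤ dg H q' + dg H p' := by
  have hN' := hE.near_switch hN.symm hq hqq' hq'x hxq'
  have hqy := (mem_far.1 hq).1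
  have hyq := (mem_far.1 hq).2.1
  have hyq' : q' ≠ y := by
    rintro rfl
    exact hyq hqq'.symm
  obtain ⟨hwx, hxw, hxw'⟩ := mem_far.1 hw
  have hwy : w ≠ y := by
    rintro rfl
    exact hxw hN.adj
  have hwq' : w ≠ q' := by
    rintro rfl
    exact hxw' hN'.adj'
  have hxp' : p' ≠ x := by
    rintro rfl
    exact hxw hwp'.symm
  have hF' := fun z w => switch_adj F y x q q' z w hqy.symm hq'x.symm
  have hw' : w ∈ far H (switch F y x q q') x := by
    refine mem_far.2 ⟨hwx, ?_, hxw'⟩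
    rw [hF']
    grind
  have hwp : (switch F y x q q').Adj w p' := by
    rw [hF']
    grind
  have := hE.near_switch hN' hw' hwp hp'q' (by
    have := hqq'.ne
    rw [hF']
    grind)
  exact ⟨hN'.adj', hE.le_add _ _ _ this⟩

theorem Extremal.card_out_ne_zero {H F : SimpleGraph V} {f : V → ℕ} {a c s : ℕ} {u v x y : V}
    (hC : Config H f a u v) (hE : Extremal H f c s) (hN : Near H f c F x y)
    (hs : dg H x + dg H y ≤ s) : (out H F x y).card ≠ 0 := by
  intro hk
  rw [card_eq_zero] at hk
  have hd : ∀ z, dg F z ≤ a := fun z => (hN.deg z).trans_le (hC.le z)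
  have hX := card_le_card_far H F hN.adj hN.adj'
  have hY := card_le_card_far H F hN.adj.symm hN.adj'.symm
  have hn := hC.le_card
  have ha := hC.two_le
  have hm := hC.sum_le
  have hfx := hC.le x
  have hfy := hC.le y
  have hyn := hN.adj.ne
  rw [hN.deg] at hX hY
  have hA₀ : ∀ p ∈ far H F x, ∀ z ∈ nbr F p, z ∈ insert y ((nbr F y).erase x) := by
    intro p hp z hz
    have := nbr_subset_of_mem_far (y := y) hp hz
    rwa [hk, union_empty] at this
  have hA : far H F x ⊆ {u, v} := by
    intro z hz
    by_contra h
    simp only [mem_insert, mem_singleton, not_or] at h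
    have h1 := hC.eq z h.1 h.2
    have h2 := hA₀ z hz
    have hzx := (mem_far.1 hz).1
    have h3 : (nbr F z).card < (insert y ((nbr F y).erase x)).card := by
      refine card_lt_card (ssubset_iff_of_subset h2 |>.2 ?_)
      by_cases hzW : z ∈ insert y ((nbr F y).erase x)
      · exact ⟨z, hzW, by simp⟩
      · refine ⟨y, mem_insert_self _ _, fun h => hzW ?_⟩
        exact mem_insert_of_mem (mem_erase.2 ⟨hzx, mem_nbr.2 (mem_nbr.1 h).symm⟩)
    have h4 : (insert y ((nbr F y).erase x)).card ≤ dg F y - 1 + 1 := by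
      refine (card_insert_le _ _).trans ?_
      rw [card_erase_of_mem (mem_nbr.2 hN.adj.symm), dg]
    have h5 := hN.deg z
    have h6 := hd y
    unfold dg at h5 h4 h6
    omega
  have hA2 : (far H F x).card ≤ 2 := (card_le_card hA).trans card_le_two
  obtain ⟨w, hw⟩ : (far H F x).Nonempty := by
    rw [← card_pos]
    have := hC.deg_add_lt x
    omega
  have hxw := mem_far.1 hw
  have hxyS := two_mul_sum_dg_le H {x, y}
  rw [sum_pair hyn, card_pair hyn] at hxyS
  set B := (far H F y).erase w with hB
  have hxB : x ∉ B := fun h => (mem_far.1 (mem_of_mem_erase h)).2.1 hN.adj.symm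
  set T := univ.filter fun z => z ≠ x ∧ ¬F.Adj x z ∧ ∃ q ∈ B, F.Adj q z with hT
  have hqT : ∀ t ∈ T, ∀ q ∈ B, F.Adj q t → H.Adj x t ∧
      ∀ p, F.Adj w p → p ≠ q ∧ (p ≠ t → F.Adj t p) := by
    intro t ht q hq hqt
    obtain ⟨-, htx, hxt, -⟩ := mem_filter.1 ht
    have hqw := ne_of_mem_erase hq
    have hqf := mem_of_mem_erase hq
    have hxt' := (hE.near_switch hN.symm hqf hqt htx hxt).adj'
    refine ⟨hxt', fun p hp => ?_⟩
    by_contra hcon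
    have hpt : p ≠ t := by
      rintro rfl
      exact hcon ⟨hqt.ne', fun h => (h rfl).elim⟩
    have h1 := (hE.near_switch_switch hN hw hqf hqw hqt htx hxt hp hpt (by tauto)).2
    have hpx : p ≠ x := by
      rintro rfl
      exact hxw.2.1 hp.symm
    have h2 := two_mul_sum_dg_le H {x, t, p}
    have h3 : x ∉ ({t, p} : Finset V) := by simp [htx.symm, hpx.symm]
    have h4 : t ∉ ({p} : Finset V) := by simp [hpt.symm]
    simp only [card_insert_of_notMem, sum_insert, h3, h4, not_false_eq_true, card_singleton,
      sum_singleton] at h2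
    have h5 : 0 < dg H y := card_pos.2 ⟨x, mem_nbr.2 hN.adj'.symm⟩
    omega
  have hT' : ∀ t ∈ T, t ≠ w ∧ ∀ p, F.Adj w p → p ≠ t → F.Adj t p := by
    intro t ht
    obtain ⟨-, -, -, q, hq, hqt⟩ := mem_filter.1 ht
    obtain ⟨h1, h2⟩ := hqT t ht q hq hqt
    exact ⟨fun h => hxw.2.2 (h ▸ h1), fun p hp => (h2 p hp).2⟩
  have hwc : a - 1 ≤ (nbr F w).card := by
    have h1 := hN.deg w
    have h2 := hC.ge w
    unfold dg at h1
    omega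
  have hTB : ∀ t ∈ T, (nbr F t ∩ B).card ≤ 1 := by
    intro t ht
    by_contra! h
    obtain ⟨hwt, hT'⟩ := hT' t ht
    set N := if F.Adj w t then insert w ((nbr F w).erase t) else nbr F w with hNd
    have h1 : (nbr F w).card ≤ N.card := by
      rw [hNd]
      split_ifs with h
      · rw [card_insert_of_notMem (by simp), card_erase_of_mem (mem_nbr.2 h)]
        omega
      · exact le_rfl
    have h2 : N ⊆ nbr F t := by
      intro z hz
      rw [mem_nbr]
      simp only [hNd] at hz
      split_ifs at hz with h
      · rcases mem_insert.1 hz with rfl | hz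
        · exact h.symm
        · exact hT' z (mem_nbr.1 (mem_of_mem_erase hz)) (ne_of_mem_erase hz)
      · exact hT' z (mem_nbr.1 hz) fun e => h (e ▸ mem_nbr.1 hz)
    have h3 : Disjoint N (nbr F t ∩ B) := by
      rw [Finset.disjoint_left]
      intro z hz hz'
      obtain ⟨hz1, hz2⟩ := mem_inter.1 hz'
      have h4 := fun p hp => ((hqT t ht z hz2 (mem_nbr.1 hz1).symm).2 p hp).1
      have h5 : z = w ∨ F.Adj w z := by
        simp only [hNd] at hz
        split_ifs at hz with h <;> simp at hz <;> tauto
      rcases h5 with rfl | h5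
      · exact notMem_erase _ _ hz2
      · exact h4 z h5 rfl
    have h4 := card_le_card (union_subset h2 (inter_subset_left : nbr F t ∩ B ⊆ _))
    rw [card_union_of_disjoint h3] at h4
    have h5 := hd t
    unfold dg at h5
    omega
  have hTc : T.card ≤ a := by
    obtain ⟨z, hz⟩ : (nbr F w).Nonempty := card_pos.1 (by omega)
    have h1 : T ⊆ insert z ((nbr F z).erase w) := by
      intro t ht
      rw [mem_insert, mem_erase, mem_nbr]
      by_cases h : t = z
      · exact Or.inl h
      · exact Or.inr ⟨(hT' t ht).1, ((hT' t ht).2 z (mem_nbr.1 hz) (Ne.symm h)).symm⟩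
    have h2 := (card_le_card h1).trans (card_insert_le _ _)
    rw [card_erase_of_mem (mem_nbr.2 (mem_nbr.1 hz).symm)] at h2
    have h3 := hd z
    unfold dg at h3
    omega
  have hsum : ∑ p ∈ B, (nbr F p ∩ T).card ≤ a := by
    rw [sum_card_nbr_inter_comm]
    exact (sum_le_card_nsmul _ _ _ hTB).trans (by simpa using hTc)
  have hsum' := sum_card_nbr_inter_le F hd hN.adj.symm B hxB
  have hle : ∑ p ∈ B, f p ≤ ∑ p ∈ B,
      ((nbr F p ∩ insert x ((nbr F x).erase y)).card + (nbr F p ∩ T).card) := by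
    refine sum_le_sum fun p hp => ?_
    rw [← hN.deg p, dg]
    refine (card_le_card ?_).trans (card_union_le _ _)
    rw [← inter_union_distrib_left]
    refine subset_inter Subset.rfl fun z hz => ?_
    rw [mem_nbr] at hz
    have hzy : z ≠ y := by
      rintro rfl
      exact (mem_far.1 (mem_of_mem_erase hp)).2.1 hz.symm
    have : ∃ q ∈ B, F.Adj q z := ⟨p, hp, hz⟩
    simp only [hT, mem_union, mem_insert, mem_erase, mem_nbr, mem_filter, mem_univ, true_and]
    tauto
  rw [sum_add_distrib] at hle
  have hBD := hC.mul_card_le B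
  have hBD' : (({u, v} : Finset V) ∩ B).card ≤ 1 := by
    have h1 : ({u, v} : Finset V) ∩ B ⊆ ({u, v} : Finset V).erase w := fun z hz =>
      mem_erase.2 ⟨ne_of_mem_erase (mem_of_mem_inter_right hz), mem_of_mem_inter_left hz⟩
    have h2 := card_le_card h1
    rw [card_erase_of_mem (hA hw)] at h2
    have := card_le_two (a := u) (b := v)
    omega
  have hyB : y ∉ B := fun h => (mem_far.1 (mem_of_mem_erase h)).1 rfl
  have hBa : B.card ≤ a := by
    by_contra! h
    have h1 : a * (a - 1 + 2) ≤ a * B.card := Nat.mul_le_mul_left _ (by omega)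
    rw [mul_add] at h1
    rw [if_neg] at hsum'
    · omega
    · exact hyB
  have hBc : _ ≤ B.card := pred_card_le_card_erase (s := far H F y) (a := w)
  omega

theorem common_eq_zero {H F : SimpleGraph V} : common H F = 0 ↔ Disjoint F H := by
  rw [common, sum_eq_zero_iff, disjoint_iff]
  constructor
  · intro h
    ext z w
    have h1 := h z (mem_univ z)
    rw [dg, card_eq_zero] at h1
    rw [← mem_nbr, h1]
    simp
  · rintro h z -
    simp [h, dg, nbr]

/-- Under the standing hypotheses, `f` is the degree sequence of a graph avoiding `H`. -/
theorem Config.exists_disjoint {H : SimpleGraph V} {f : V → ℕ} {a : ℕ} {u v : V}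
    (hC : Config H f a u v) (hpar : Even (∑ z, f z)) :
    ∃ F : SimpleGraph V, Disjoint F H ∧ ∀ z, dg F z = f z := by
  obtain ⟨F₀, hF₀, hmin⟩ := Set.exists_min_image {F : SimpleGraph V | ∀ z, dg F z = f z}
    (common H) (Set.toFinite _) (exists_graph_of_degrees f a u v hC.le_card hC.le hC.eq hpar)
  refine ⟨F₀, ?_, hF₀⟩
  by_contra hne
  rw [← common_eq_zero, common, sum_eq_zero_iff] at hne
  push Not at hne
  obtain ⟨x₀, -, hx₀⟩ := hne
  obtain ⟨y₀, hy₀⟩ := card_pos.1 (Nat.pos_of_ne_zero hx₀)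
  rw [mem_nbr] at hy₀
  obtain ⟨⟨F, x, y⟩, hN, hs⟩ := Set.exists_min_image
    {t : SimpleGraph V × V × V | Near H f (common H F₀) t.1 t.2.1 t.2.2}
    (fun t => dg H t.2.1 + dg H t.2.2) (Set.toFinite _)
    ⟨(F₀, x₀, y₀), hF₀, le_rfl, hy₀.1, hy₀.2⟩
  have hE : Extremal H f (common H F₀) (dg H x + dg H y) :=
    ⟨hmin, fun F' x' y' h => hs (F', x', y') h⟩
  have hfalse : ∀ x y, Near H f (common H F₀) F x y → Extremal H f (common H F₀) (dg H x + dg H y) →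
      dg H y ≤ dg H x → False := by
    intro x y hN hE hyx
    have h1 := hE.card_out_le_one hC hN le_rfl hyx
    have h2 := hE.card_out_ne_one hC hN le_rfl hyx
    have h3 := hE.card_out_ne_zero hC hN le_rfl
    omega
  rcases le_total (dg H y) (dg H x) with h | h
  · exact hfalse x y hN hE h
  · exact hfalse y x hN.symm (add_comm (dg H x) _ ▸ hE) h

theorem ncard_neighborSet (F : SimpleGraph V) (z : V) : (F.neighborSet z).ncard = dg F z := by
  rw [dg, ← Set.ncard_coe_finset]
  congr 1
  ext w
  simp

theorem dg_compl_add_dg (G : SimpleGraph V) (z : V) : dg Gᶜ z + dg G z + 1 = Fintype.card V := by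
  have h : nbr Gᶜ z = (insert z (nbr G z))ᶜ := by
    ext w
    simp [compl_adj, eq_comm]
  have h1 := card_compl_add_card (insert z (nbr G z))
  rw [card_insert_of_notMem (by simp)] at h1
  rw [dg, dg, h, ← h1, add_assoc]

theorem hasABFactorThrough_of_degrees {G : SimpleGraph V} {a b : ℕ} {u v : V} (huv : G.Adj u v)
    (f : V → ℕ) (ha : 2 ≤ a) (hn : 3 * a + 4 ≤ Fintype.card V)
    (hcomp : ∑ z, dg Gᶜ z + a + 2 ≤ 2 * Fintype.card V) (hle : ∀ z, f z ≤ a)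
    (hge : ∀ z, a ≤ f z + (if z = u then 1 else 0) + (if z = v then 1 else 0))
    (hb : ∀ z, f z + (if z = u then 1 else 0) + (if z = v then 1 else 0) ≤ b)
    (hG : ∀ z, f z + (if z = u then 1 else 0) + (if z = v then 1 else 0) ≤ dg G z)
    (hpar : Even (∑ z, f z)) : HasABFactorThrough G a b u v := by
  have hne := huv.ne
  have hdH := dg_sup_edge Gᶜ hne (by simp [huv])
  have hC : Config (Gᶜ ⊔ edge u v) f a u v := by
    refine ⟨ha, hn, ?_, by simp [edge_adj, hne], fun z => ?_, hle, fun z => ?_, fun z hu hv => ?_⟩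
    · simp only [hdH, sum_add_distrib, sum_ite_eq', mem_univ, if_true]
      omega
    · have h1 := hG z
      have h2 := dg_compl_add_dg G z
      rw [hdH]
      omega
    · have := hge z
      split_ifs at this with h1 h2
      · exact (hne (h1.symm.trans h2)).elim
      all_goals omega
    · have := hge z
      rw [if_neg hu, if_neg hv] at this
      exact le_antisymm (hle z) this
  obtain ⟨F, hF, hdF⟩ := hC.exists_disjoint hpar
  rw [SimpleGraph.disjoint_left] at hF
  have hFuv : ¬F.Adj u v := fun h => hF _ _ h hC.adj
  refine ⟨F ⊔ edge u v, sup_le (fun z w h => ?_) (by simp [huv]), by simp [edge_adj, hne],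
    fun z => ?_⟩
  · by_contra hGzw
    exact hF _ _ h (Or.inl ⟨h.ne, hGzw⟩)
  · rw [ncard_neighborSet, dg_sup_edge F hne hFuv, hdF]
    exact ⟨hge z, hb z⟩

theorem HasABFactorThrough.symm {G : SimpleGraph V} {a b : ℕ} {u v : V}
    (h : HasABFactorThrough G a b u v) : HasABFactorThrough G a b v u := by
  obtain ⟨F, h1, h2, h3⟩ := h
  exact ⟨F, h1, h2.symm, h3⟩

theorem hasABFactorThrough_of_two_le {G : SimpleGraph V} {a b : ℕ} {u v : V} (huv : G.Adj u v)
    (ha : 2 ≤ a) (hab : a ≤ b) (hn : 3 * a + 4 ≤ Fintype.card V) (hδ : ∀ z, a ≤ dg G z)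
    (hpar : a = b → Even (Fintype.card V * a))
    (hcomp : ∑ z, dg Gᶜ z + a + 2 ≤ 2 * Fintype.card V) : HasABFactorThrough G a b u v := by
  by_cases heven : Even (Fintype.card V * a)
  · have hf : ∀ z, a - ((if z = u then 1 else 0) + (if z = v then 1 else 0)) +
        (if z = u then 1 else 0) + (if z = v then 1 else 0) = a := by
      intro z
      split_ifs <;> omega
    refine hasABFactorThrough_of_degrees huv
      (fun z => a - ((if z = u then 1 else 0) + (if z = v then 1 else 0))) ha hn hcomp
      (fun z => Nat.sub_le _ _) (fun z => (hf z).ge) (fun z => (hf z).trans_le hab)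
      (fun z => (hf z).trans_le (hδ z)) ?_
    have h1 := sum_congr rfl fun z (_ : z ∈ (univ : Finset V)) => hf z
    simp only [sum_add_distrib, sum_ite_eq', mem_univ, if_true, sum_const, card_univ,
      smul_eq_mul] at h1
    rw [← h1, add_assoc, Nat.even_add] at heven
    exact heven.2 even_two
  · have hlt : a < b := lt_of_le_of_ne hab fun h => heven (hpar h)
    have key : ∀ u v, G.Adj u v → a < dg G u → HasABFactorThrough G a b u v := by
      intro u v huv hu
      have hne := huv.ne
      have hf : ∀ z, a - (if z = v then 1 else 0) + (if z = u then 1 else 0) +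
          (if z = v then 1 else 0) = a + (if z = u then 1 else 0) := by
        intro z
        split_ifs <;> omega
      refine hasABFactorThrough_of_degrees huv (fun z => a - (if z = v then 1 else 0)) ha hn hcomp
        (fun z => Nat.sub_le _ _) (fun z => ?_) (fun z => ?_) (fun z => ?_) ?_
      · rw [hf]; omega
      · rw [hf]; split_ifs <;> omega
      · rw [hf]
        split_ifs with h
        · subst h; exact hu
        · exact hδ z
      · have h1 := sum_congr rfl fun z (_ : z ∈ (univ : Finset V)) => hf z
        simp only [sum_add_distrib, sum_ite_eq', mem_univ, if_true, sum_const, card_univ,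
          smul_eq_mul] at h1
        rw [Nat.even_iff] at heven ⊢
        omega
    rcases lt_or_ge a (dg G u) with h | h
    · exact key u v huv h
    rcases lt_or_ge a (dg G v) with h' | h'
    · exact (key v u huv.symm h').symm
    · have h1 := two_mul_sum_dg_le Gᶜ {u, v}
      rw [sum_pair huv.ne, card_pair huv.ne] at h1
      have h2 := dg_compl_add_dg G u
      have h3 := dg_compl_add_dg G v
      omega

/-- A maximum matching through `uv` leaves at most two vertices uncovered. -/
theorem exists_matching_through {G : SimpleGraph V} {u v : V} (huv : G.Adj u v)
    (hn : 7 ≤ Fintype.card V) (hcomp : ∑ z, dg Gᶜ z + 4 ≤ 2 * Fintype.card V) :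
    ∃ M ≤ G, M.Adj u v ∧ (∀ z, dg M z ≤ 1) ∧
      (∀ x y, dg M x = 0 → dg M y = 0 → ¬G.Adj x y) ∧ (univ.filter fun z => dg M z = 0).card ≤ 2 := by
  have hne := huv.ne
  obtain ⟨M, ⟨hMG, hMuv, hM⟩, hmax⟩ := Set.exists_max_image
    {M : SimpleGraph V | M ≤ G ∧ M.Adj u v ∧ ∀ z, dg M z ≤ 1} (fun M => ∑ z, dg M z)
    (Set.toFinite _) ⟨edge u v, by simp [huv], by simp [edge_adj, hne], fun z => by
      have := dg_sup_edge ⊥ hne (by simp) z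
      rw [bot_sup_eq] at this
      rw [this]
      have : dg (⊥ : SimpleGraph V) z = 0 := by simp [dg, nbr]
      rw [this]
      split_ifs with h1 h2
      · exact (hne (h1.symm.trans h2)).elim
      all_goals omega⟩
  have hind : ∀ x y, dg M x = 0 → dg M y = 0 → ¬G.Adj x y := by
    intro x y hx hy hxy
    have h0 : ¬M.Adj x y := fun h => by
      have := card_pos.2 ⟨y, mem_nbr.2 h⟩
      unfold dg at hx
      omega
    have hd := dg_sup_edge M hxy.ne h0
    have h1 := hmax (M ⊔ edge x y) ⟨sup_le hMG (by simp [hxy]), Or.inl hMuv, fun z => by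
      have := hM z
      have := hxy.ne
      rw [hd]
      split_ifs <;> subst_vars <;> simp_all⟩
    simp [hd, sum_add_distrib] at h1
  refine ⟨M, hMG, hMuv, hM, hind, ?_⟩
  by_contra! hU
  obtain ⟨X, hXU, hX⟩ := exists_subset_card_eq hU
  have hX0 : ∀ x ∈ X, dg M x = 0 := fun x hx => (mem_filter.1 (hXU hx)).2
  have haug : ∀ z w, M.Adj z w → z ≠ u → z ≠ v →
      3 ≤ (nbr Gᶜ z ∩ X).card + (nbr Gᶜ w ∩ X).card := by
    intro z w hzw hzu hzv
    by_contra! hlt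
    have hadj : ∀ z w, M.Adj z w → ∀ x ∈ X \ nbr Gᶜ z, x ≠ z ∧ G.Adj z x := by
      intro z w hzw x hx
      obtain ⟨h1, h2⟩ := mem_sdiff.1 hx
      have hxz : x ≠ z := by
        rintro rfl
        have := card_pos.2 ⟨w, mem_nbr.2 hzw⟩
        have := hX0 _ h1
        unfold dg at this
        omega
      simp only [mem_nbr, compl_adj, not_and, not_not] at h2
      exact ⟨hxz, h2 hxz.symm⟩
    have hz := card_inter_add_card_sdiff X (nbr Gᶜ z)
    have hw := card_inter_add_card_sdiff X (nbr Gᶜ w)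
    rw [inter_comm] at hz hw
    obtain ⟨p, hp, q, hq, hpq⟩ : ∃ p ∈ X \ nbr Gᶜ z, ∃ q ∈ X \ nbr Gᶜ w, p ≠ q := by
      rcases Nat.lt_or_ge 1 (X \ nbr Gᶜ w).card with h | h
      · obtain ⟨p, hp⟩ := card_pos.1 (show 0 < (X \ nbr Gᶜ z).card by omega)
        obtain ⟨q, hq, hpq⟩ := exists_mem_ne h p
        exact ⟨p, hp, q, hq, hpq.symm⟩
      · obtain ⟨q, hq⟩ := card_pos.1 (show 0 < (X \ nbr Gᶜ w).card by omega)
        obtain ⟨p, hp, hpq⟩ := exists_mem_ne (show 1 < (X \ nbr Gᶜ z).card by omega) q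
        exact ⟨p, hp, q, hq, hpq⟩
    obtain ⟨hpz, hzp⟩ := hadj z w hzw p hp
    obtain ⟨hqw, hwq⟩ := hadj w z hzw.symm q hq
    have hp0 := hX0 p (mem_sdiff.1 hp).1
    have hq0 := hX0 q (mem_sdiff.1 hq).1
    have hno : ∀ x, dg M x = 0 → ∀ t, ¬M.Adj t x := fun x hx t h => by
      have := card_pos.2 ⟨t, mem_nbr.2 h.symm⟩
      unfold dg at hx
      omega
    have hqz : q ≠ z := by
      rintro rfl
      exact hno _ hq0 _ hzw.symm
    have h1 := dg_sdiff_edge M hzw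
    have h2 := dg_sup_edge (M \ edge z w) hpz.symm fun h => hno p hp0 z h.1
    have h3 := dg_sup_edge (M \ edge z w ⊔ edge z p) hqw.symm (by
      rintro (h | h)
      · exact hno q hq0 w h.1
      · rw [edge_adj] at h
        have := hzw.ne
        grind)
    have hd : ∀ t, dg (M \ edge z w ⊔ edge z p ⊔ edge w q) t =
        dg M t + (if t = p then 1 else 0) + (if t = q then 1 else 0) := fun t => by
      have := h1 t
      have := h2 t
      have := h3 t
      omega
    have h4 := hmax (M \ edge z w ⊔ edge z p ⊔ edge w q)
      ⟨sup_le (sup_le (sdiff_le.trans hMG) (by simp [hzp])) (by simp [hwq]),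
        Or.inl (Or.inl ⟨hMuv, by rw [edge_adj]; grind⟩), fun t => by
          have := hM t
          rw [hd]
          split_ifs <;> subst_vars <;> simp_all⟩
    simp [hd, sum_add_distrib] at h4
  have hσ : ∀ z, ∃ w, M.Adj z w ∨ dg M z = 0 ∧ w = z := by
    intro z
    rcases (nbr M z).eq_empty_or_nonempty with h | ⟨w, hw⟩
    · exact ⟨z, Or.inr ⟨by rw [dg, h, card_empty], rfl⟩⟩
    · exact ⟨w, Or.inl (mem_nbr.1 hw)⟩
  choose σ hσ using hσ
  have huniq : ∀ z w w', M.Adj z w → M.Adj z w' → w = w' := fun z w w' h h' =>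
    card_le_one.1 (hM z) w (mem_nbr.2 h) w' (mem_nbr.2 h')
  have hinv : Function.Involutive σ := by
    intro z
    rcases hσ z with h | ⟨h, h'⟩
    · rcases hσ (σ z) with h1 | ⟨h1, h2⟩
      · exact huniq _ _ _ h1 h.symm
      · have := card_pos.2 ⟨z, mem_nbr.2 h.symm⟩
        unfold dg at h1
        omega
    · rw [h', h']
  have hsum : ∑ z, (nbr Gᶜ (σ z) ∩ X).card = ∑ z, (nbr Gᶜ z ∩ X).card :=
    Equiv.sum_comp hinv.toPerm fun z => (nbr Gᶜ z ∩ X).card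
  have hpt : ∀ z, 3 + (if z ∈ X then 1 else 0) ≤ (nbr Gᶜ z ∩ X).card + (nbr Gᶜ (σ z) ∩ X).card +
      (if z = u then 3 else 0) + if z = v then 3 else 0 := by
    intro z
    have hX' : X.erase z ⊆ nbr Gᶜ z ∩ X ∨ dg M z ≠ 0 := by
      by_contra! h
      refine h.1 fun x hx => mem_inter.2 ⟨?_, mem_of_mem_erase hx⟩
      rw [mem_nbr, compl_adj]
      exact ⟨(ne_of_mem_erase hx).symm, hind z x h.2 (hX0 x (mem_of_mem_erase hx))⟩
    have hpos : ∀ z w, M.Adj z w → dg M z ≠ 0 := fun z w h =>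
      (card_pos.2 ⟨w, mem_nbr.2 h⟩).ne'
    by_cases hzX : z ∈ X
    · have hz0 := hX0 z hzX
      have h1 := card_le_card (hX'.resolve_right (not_not.2 hz0))
      rw [card_erase_of_mem hzX] at h1
      rcases hσ z with h | ⟨-, h⟩
      · exact (hpos _ _ h hz0).elim
      · rw [h, if_pos hzX]
        omega
    · rw [if_neg hzX]
      rcases hσ z with h | ⟨hz0, h⟩
      · by_cases hzu : z = u
        · rw [if_pos hzu]; omega
        by_cases hzv : z = v
        · rw [if_pos hzv]; omega
        have := haug z _ h hzu hzv
        omega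
      · have h1 := card_le_card (hX'.resolve_right (not_not.2 hz0))
        rw [erase_eq_of_notMem hzX] at h1
        omega
  have h1 := sum_le_sum fun z (_ : z ∈ (univ : Finset V)) => hpt z
  simp only [sum_add_distrib, sum_ite_eq', mem_univ, if_true, hsum, sum_ite_mem, univ_inter,
    sum_const, card_univ, smul_eq_mul, mul_one, hX] at h1
  rw [sum_card_nbr_inter_comm] at h1
  simp only [inter_univ] at h1
  have h2 := two_mul_sum_dg_le Gᶜ X
  rw [hX] at h2
  unfold dg at h2 hcomp
  omega

theorem hasABFactorThrough_one {G : SimpleGraph V} {b : ℕ} {u v : V} (huv : G.Adj u v)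
    (hb : 2 ≤ b) (hn : 7 ≤ Fintype.card V) (hδ : ∀ z, 1 ≤ dg G z)
    (hcomp : ∑ z, dg Gᶜ z + 4 ≤ 2 * Fintype.card V) : HasABFactorThrough G 1 b u v := by
  obtain ⟨M, hMG, hMuv, hM, hind, hU⟩ := exists_matching_through huv hn hcomp
  suffices h : ∃ F ≤ G, F.Adj u v ∧ ∀ z, 1 ≤ dg F z ∧ dg F z ≤ 2 by
    obtain ⟨F, h1, h2, h3⟩ := h
    refine ⟨F, h1, h2, fun z => ?_⟩
    rw [ncard_neighborSet]
    exact ⟨(h3 z).1, (h3 z).2.trans hb⟩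
  by_cases h0 : ∀ z, dg M z ≠ 0
  · exact ⟨M, hMG, hMuv, fun z => ⟨Nat.pos_of_ne_zero (h0 z), (hM z).trans one_le_two⟩⟩
  push Not at h0
  obtain ⟨x, hx⟩ := h0
  have hno : ∀ x, dg M x = 0 → ∀ t, ¬M.Adj x t := fun x hx t h =>
    (card_pos.2 ⟨t, mem_nbr.2 h⟩).ne' hx
  have hone : ∀ x, dg M x = 0 → ∀ t, G.Adj x t → dg M t = 1 := fun x hx t h => by
    have h1 : dg M t ≠ 0 := fun h' => hind x t hx h' h
    have := hM t
    omega
  by_cases h1 : ∀ z, dg M z = 0 → z = x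
  · obtain ⟨y, hy⟩ := card_pos.1 (hδ x)
    rw [mem_nbr] at hy
    have hd := dg_sup_edge M hy.ne (hno x hx y)
    refine ⟨M ⊔ edge x y, sup_le hMG (by simp [hy]), Or.inl hMuv, fun z => ?_⟩
    have hzM := hM z
    have hz1 := h1 z
    have hy1 := hone x hx y hy
    rw [hd]
    grind
  push Not at h1
  obtain ⟨x', hx', hxx'⟩ := h1
  have h2 : ∀ z, dg M z = 0 → z = x ∨ z = x' := by
    intro z hz
    by_contra! h
    have h3 : ({z, x, x'} : Finset V) ⊆ univ.filter fun z => dg M z = 0 := by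
      simp [insert_subset_iff, hz, hx, hx']
    have h4 := card_le_card h3
    rw [card_eq_three.2 ⟨z, x, x', h.1, h.2, hxx'.symm, rfl⟩] at h4
    omega
  obtain ⟨y, y', hy, hy', hyy'⟩ : ∃ y y', G.Adj x y ∧ G.Adj x' y' ∧ y ≠ y' := by
    obtain ⟨y, hy⟩ := card_pos.1 (hδ x)
    obtain ⟨y', hy'⟩ := card_pos.1 (hδ x')
    rcases Nat.lt_or_ge 1 (dg G x) with h | h
    · obtain ⟨t, ht, hty⟩ := exists_mem_ne h y'
      exact ⟨t, y', mem_nbr.1 ht, mem_nbr.1 hy', hty⟩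
    rcases Nat.lt_or_ge 1 (dg G x') with h' | h'
    · obtain ⟨t, ht, hty⟩ := exists_mem_ne h' y
      exact ⟨y, t, mem_nbr.1 hy, mem_nbr.1 ht, hty.symm⟩
    have h3 := two_mul_sum_dg_le Gᶜ {x, x'}
    rw [sum_pair hxx'.symm, card_pair hxx'.symm] at h3
    have h4 := dg_compl_add_dg G x
    have h5 := dg_compl_add_dg G x'
    omega
  have hy1 := hone x hx y hy
  have hy1' := hone x' hx' y' hy'
  have hd := dg_sup_edge M hy.ne (hno x hx y)
  have hd' := dg_sup_edge (M ⊔ edge x y) hy'.ne (by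
    rintro (h | h)
    · exact hno x' hx' y' h
    · rw [edge_adj] at h
      grind)
  refine ⟨M ⊔ edge x y ⊔ edge x' y', sup_le (sup_le hMG (by simp [hy])) (by simp [hy']),
    Or.inl (Or.inl hMuv), fun z => ?_⟩
  have hzM := hM z
  have hz2 := h2 z
  rw [hd', hd]
  grind

end

/-- If 1 ≤ a ≤ b, b ≥ 2, δ(G) ≥ a, n ≥ 3a+4, na even when a = b, and
e(Ḡ) ≤ n - ⌈a/2⌉ - 1, then G is [a,b]-covered. -/
theorem abCovered_of_complement_small {n a b : ℕ} (ha : 1 ≤ a) (hab : a ≤ b)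
    (hb : 2 ≤ b) (hn : 3 * a + 4 ≤ n) (G : SimpleGraph (Fin n)) [DecidableRel G.Adj]
    (hδ : a ≤ G.minDegree) (hpar : a = b → Even (n * a))
    (hcomp : Gᶜ.edgeFinset.card + (a + 1) / 2 + 1 ≤ n) :
    IsABCovered G a b := by
  intro u v huv
  have hdeg : ∀ z, a ≤ dg G z := fun z => by
    have h1 := hδ.trans (G.minDegree_le_degree z)
    rwa [← G.card_neighborSet_eq_degree, ← Nat.card_eq_fintype_card, Nat.card_coe_set_eq,
      ncard_neighborSet] at h1
  have hsum : ∑ z, dg Gᶜ z = 2 * Gᶜ.edgeFinset.card := by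
    rw [sum_dg]
    congr!
  rcases Nat.lt_or_ge 1 a with h | h
  · exact hasABFactorThrough_of_two_le huv h hab (by simpa using hn) hdeg (by simpa using hpar)
      (by rw [hsum, Fintype.card_fin]; omega)
  · obtain rfl : a = 1 := le_antisymm h ha
    exact hasABFactorThrough_one huv hb (by simpa using hn) hdeg
      (by rw [hsum, Fintype.card_fin]; omega)
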